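/- On V = F_{q²} ⊗ F_q ⊗ F_{q²} ⊗ F_q, the operators ξ₂ = (1−q⁴)⁻¹ (A⁺K⁻¹ ⊗ 1 ⊗ 1 ⊗ 1) and ξ₁ = (1−q²)⁻¹ (A⁻ ⊗ a⁺k⁻¹ ⊗ 1 ⊗ 1 + K ⊗ a⁻k⁻¹ ⊗ A⁺K⁻¹ ⊗ 1 + K ⊗ 1 ⊗ K⁻¹ ⊗ a⁺k⁻¹) satisfy the q-Serre relations of type C₂: ξ₁³ξ₂ − [3]₁ ξ₁²ξ₂ξ₁ + [3]₁ ξ₁ξ₂ξ₁² − ξ₂ξ₁³ = 0 and ξ₂²ξ₁ − (q²+q⁻²) ξ₂ξ₁ξ₂ + ξ₁ξ₂² = 0, where [3]₁ = q² + 1 + q⁻². -/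

import Mathlib

noncomputable section

/-- The base field `K = ℚ(q)`, rational functions over `ℚ`. -/
abbrev K : Type := RatFunc ℚ

/-- The indeterminate `q`. -/
def q : K := RatFunc.X

/-- `⟨m⟩ = q^m − q^{−m}`. -/
def qbra (m : ℕ) : K := q ^ m - q⁻¹ ^ m

/-- `[m]₁ = ⟨m⟩/⟨1⟩`. -/
def qn1 (m : ℕ) : K := qbra m / qbra 1

/-- `[m]₂ = ⟨2m⟩/⟨2⟩`. -/
def qn2 (m : ℕ) : K := qbra (2 * m) / qbra 2

/-- The Fock space with basis `|m⟩, m ∈ ℕ` (underlying both `F_q` and `F_{q²}`). -/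
abbrev F : Type := ℕ →₀ K

/-- The basis vector `|m⟩`. -/
def ket (m : ℕ) : F := Finsupp.single m 1

/-- On `F_q`, the operator `k : |m⟩ ↦ q^m |m⟩`. -/
def opK : Module.End K F := Finsupp.lift F K ℕ fun m => (q ^ m) • ket m

/-- The inverse `k⁻¹ : |m⟩ ↦ q^{−m} |m⟩`. -/
def opKInv : Module.End K F := Finsupp.lift F K ℕ fun m => (q ^ m)⁻¹ • ket m

/-- The raising operator `a⁺ = A⁺ : |m⟩ ↦ |m+1⟩`. -/
def opAp : Module.End K F := Finsupp.lift F K ℕ fun m => ket (m + 1)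

/-- On `F_q`, the lowering operator `a⁻ : |m⟩ ↦ (1 − q^{2m}) |m-1⟩` (killing `|0⟩`). -/
def opAm : Module.End K F := Finsupp.lift F K ℕ fun m => (1 - q ^ (2 * m)) • ket (m - 1)

/-- On `F_{q²}`, the operator `K : |m⟩ ↦ q^{2m} |m⟩`. -/
def opK2 : Module.End K F := Finsupp.lift F K ℕ fun m => (q ^ (2 * m)) • ket m

/-- The inverse `K⁻¹ : |m⟩ ↦ q^{−2m} |m⟩`. -/
def opK2Inv : Module.End K F := Finsupp.lift F K ℕ fun m => (q ^ (2 * m))⁻¹ • ket m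

/-- On `F_{q²}`, the lowering operator `A⁻ : |m⟩ ↦ (1 − q^{4m}) |m-1⟩` (killing `|0⟩`). -/
def opAm2 : Module.End K F := Finsupp.lift F K ℕ fun m => (1 - q ^ (4 * m)) • ket (m - 1)

open TensorProduct

/-- The tensor product `V = F_{q²} ⊗ F_q ⊗ F_{q²} ⊗ F_q`. -/
abbrev V4 : Type := F ⊗[K] (F ⊗[K] (F ⊗[K] F))

instance : AddCommGroup (F ⊗[K] (F ⊗[K] F)) := by
  exact @TensorProduct.addCommGroup K _ F (F ⊗[K] F) _ _ _ _

instance : AddCommGroup V4 := by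
  exact @TensorProduct.addCommGroup K _ F (F ⊗[K] (F ⊗[K] F)) _ _ _ _

/-- `f ⊗ g ⊗ h ⊗ i` as an operator on `V`. -/
def tens4 (f g h i : Module.End K F) : Module.End K V4 :=
  TensorProduct.map f (TensorProduct.map g (TensorProduct.map h i))

/-- The operator `ξ₂ = (1−q⁴)⁻¹ (A⁺K⁻¹ ⊗ 1 ⊗ 1 ⊗ 1)`. -/
def xi2 : Module.End K V4 := (1 - q ^ 4)⁻¹ • tens4 (opAp * opK2Inv) 1 1 1

/-- The operator
`ξ₁ = (1−q²)⁻¹ (A⁻ ⊗ a⁺k⁻¹ ⊗ 1 ⊗ 1 + K ⊗ a⁻k⁻¹ ⊗ A⁺K⁻¹ ⊗ 1 + K ⊗ 1 ⊗ K⁻¹ ⊗ a⁺k⁻¹)`. -/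
def xi1 : Module.End K V4 :=
  (1 - q ^ 2)⁻¹ •
    (tens4 opAm2 (opAp * opKInv) 1 1
      + tens4 opK2 (opAm * opKInv) (opAp * opK2Inv) 1
      + tens4 opK2 1 opK2Inv (opAp * opKInv))

/-!
Write `[x, y]_c = xy - c yx`. The two Serre expressions in `x = ξ₁`, `y = ξ₂` are the iterated
`q`-commutators `[x, [x, [x, y]_t]_1]_{t⁻¹}` and `[[x, y]_t, y]_{t⁻¹}` with `t = q²`, so it
suffices to compute them one bracket at a time. Splitting off the first tensor factor, `ξ₂` is
proportional to `B ⊗ 1` with `B = A⁺K⁻¹`, and `ξ₁` to `A⁻ ⊗ b + K ⊗ X` with `b = a⁺k⁻¹ ⊗ 1 ⊗ 1`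
and `X = a⁻k⁻¹ ⊗ A⁺K⁻¹ ⊗ 1 + 1 ⊗ K⁻¹ ⊗ a⁺k⁻¹`. The `q`-oscillator relations give
`[ξ₁, ξ₂]_t ∝ K⁻¹ ⊗ b`, which `q`-commutes with `B ⊗ 1`, and
`[ξ₁, K⁻¹ ⊗ b]_1 = (1 - t) A⁻K⁻¹ ⊗ b² + 1 ⊗ [X, b]_1`. The last bracket with `ξ₁` vanishes as soon
as `[[X, b]_1, b]_{t⁻¹} = 0 = [X, [X, b]_1]_{t⁻¹}`. Here `[X, b]_1` is proportional to
`k⁻² ⊗ A⁺K⁻¹ ⊗ 1`, and both relations can be read off.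
-/

section QCommutator

variable {𝕜 R : Type*} [CommRing 𝕜] [Ring R] [Algebra 𝕜 R]

/-- The `c`-deformed commutator `x * y - c • (y * x)`, as a bilinear map. -/
def qComm (c : 𝕜) : R →ₗ[𝕜] R →ₗ[𝕜] R :=
  LinearMap.mul 𝕜 R - c • (LinearMap.mul 𝕜 R).flip

lemma qComm_apply (c : 𝕜) (x y : R) : qComm c x y = x * y - c • (y * x) := rfl

lemma qComm_eq_zero_iff {c : 𝕜} {x y : R} : qComm c x y = 0 ↔ x * y = c • (y * x) := by
  rw [qComm_apply, sub_eq_zero]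

lemma qComm_one_eq_zero_iff_commute {x y : R} : qComm (1 : 𝕜) x y = 0 ↔ Commute x y := by
  rw [qComm_eq_zero_iff, one_smul, commute_iff_eq]

lemma qComm_sq_left {c : 𝕜} {x y : R} (h : qComm c x y = 0) : qComm (c ^ 2) (x ^ 2) y = 0 := by
  rw [qComm_eq_zero_iff] at h ⊢
  rw [sq x, mul_assoc, h, mul_smul_comm, ← mul_assoc, h, smul_mul_assoc, smul_smul, mul_assoc,
    ← sq]

lemma qComm_sq_right {c : 𝕜} {x y : R} (h : qComm c x y = 0) : qComm (c ^ 2) x (y ^ 2) = 0 := by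
  rw [qComm_eq_zero_iff] at h ⊢
  rw [sq y, ← mul_assoc, h, smul_mul_assoc, mul_assoc, h, mul_smul_comm, smul_smul, mul_assoc,
    ← sq]

lemma qComm_qComm_right (c₁ c₂ : 𝕜) (x y : R) :
    qComm c₂ (qComm c₁ x y) y =
      (c₁ * c₂) • (y ^ 2 * x) - (c₁ + c₂) • (y * x * y) + x * y ^ 2 := by
  simp only [qComm_apply, pow_succ, pow_zero, one_mul, mul_sub, sub_mul, mul_assoc,
    mul_smul_comm, smul_mul_assoc]
  module

lemma qComm_qComm_qComm_left (c₁ c₂ c₃ : 𝕜) (x y : R) :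
    qComm c₃ x (qComm c₂ x (qComm c₁ x y)) =
      x ^ 3 * y - (c₁ + c₂ + c₃) • (x ^ 2 * y * x)
        + (c₁ * c₂ + c₁ * c₃ + c₂ * c₃) • (x * y * x ^ 2) - (c₁ * c₂ * c₃) • (y * x ^ 3) := by
  simp only [qComm_apply, pow_succ, pow_zero, one_mul, mul_sub, sub_mul, mul_assoc,
    mul_smul_comm, smul_mul_assoc]
  module

lemma qComm_qComm_one_right (c : 𝕜) (x y : R) :
    qComm c (qComm (1 : 𝕜) x y) y =
      (1 - c) • qComm (1 : 𝕜) x (y ^ 2) - qComm c y (qComm (1 : 𝕜) x y) := by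
  simp only [qComm_apply, sq, mul_sub, sub_mul, mul_assoc, mul_smul_comm, smul_mul_assoc]
  module

end QCommutator

open scoped RingTheory.LinearMap

section TensorMap

variable {𝕜 M N : Type*} [CommRing 𝕜] [AddCommGroup M] [Module 𝕜 M] [AddCommGroup N] [Module 𝕜 N]

lemma qComm_map_of_qComm_left_eq_zero {c : 𝕜} (d : 𝕜) {f f' : Module.End 𝕜 M}
    (h : qComm c f f' = 0) (g g' : Module.End 𝕜 N) :
    qComm (c * d) (f ⊗ₘ g) (f' ⊗ₘ g') = (f * f') ⊗ₘ qComm d g g' := by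
  rw [qComm_eq_zero_iff] at h
  simp only [qComm_apply, ← TensorProduct.map_mul, h, sub_eq_add_neg, ← neg_smul,
    TensorProduct.map_add_right, TensorProduct.map_smul_left, TensorProduct.map_smul_right]
  module

lemma qComm_map_of_commute_left (c : 𝕜) {f f' : Module.End 𝕜 M} (h : Commute f f')
    (g g' : Module.End 𝕜 N) : qComm c (f ⊗ₘ g) (f' ⊗ₘ g') = (f * f') ⊗ₘ qComm c g g' := by
  simpa only [one_mul] using
    qComm_map_of_qComm_left_eq_zero c (qComm_one_eq_zero_iff_commute.mpr h) g g'

lemma qComm_map_of_commute_right (c : 𝕜) (f f' : Module.End 𝕜 M) {g g' : Module.End 𝕜 N}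
    (h : Commute g g') : qComm c (f ⊗ₘ g) (f' ⊗ₘ g') = qComm c f f' ⊗ₘ (g * g') := by
  simp only [qComm_apply, ← TensorProduct.map_mul, h.eq, sub_eq_add_neg, ← neg_smul,
    TensorProduct.map_add_left, TensorProduct.map_smul_left]

end TensorMap

/-- A representation in `R` of the `p`-oscillator algebra, with `raise`, `lower`, `weight` in the
roles of `a⁺`, `a⁻`, `k`. -/
structure QOscillator {𝕜 : Type*} [CommRing 𝕜] (p : 𝕜) (R : Type*) [Ring R] [Algebra 𝕜 R] where
  raise : R
  lower : R
  weight : Rˣ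
  weight_mul_raise : weight * raise = p • (raise * weight)
  lower_mul_weight : lower * weight = p • (weight * lower)
  lower_mul_raise : lower * raise = 1 - p ^ 2 • (weight : R) ^ 2
  raise_mul_lower : raise * lower = 1 - (weight : R) ^ 2

namespace QOscillator

section Relations

variable {𝕜 R : Type*} [CommRing 𝕜] [Ring R] [Algebra 𝕜 R] {p : 𝕜} (o : QOscillator p R)

/-- The element `a⁺k⁻¹`. -/
def twistedRaise : R := o.raise * ↑o.weight⁻¹

/-- The element `a⁻k⁻¹`. -/
def twistedLower : R := o.lower * ↑o.weight⁻¹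

lemma twistedLower_mul_weight : o.twistedLower * o.weight = o.lower :=
  Units.inv_mul_cancel_right _ _

lemma weight_inv_mul_lower : ↑o.weight⁻¹ * o.lower = p • o.twistedLower := by
  rw [Units.inv_mul_eq_iff_eq_mul, twistedLower, mul_smul_comm, ← mul_assoc, ← smul_mul_assoc,
    ← o.lower_mul_weight, Units.mul_inv_cancel_right]

lemma qComm_weight_twistedRaise : qComm p (o.weight : R) o.twistedRaise = 0 := by
  rw [qComm_eq_zero_iff, twistedRaise, ← mul_assoc, o.weight_mul_raise,
    Units.inv_mul_cancel_right, smul_mul_assoc, Units.mul_inv_cancel_right]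

lemma qComm_lower_weight_inv :
    qComm (1 : 𝕜) o.lower (↑o.weight⁻¹ : R) = (1 - p) • o.twistedLower := by
  rw [qComm_apply, o.weight_inv_mul_lower, one_smul, sub_smul, one_smul, twistedLower]

lemma qComm_lower_twistedRaise :
    qComm p o.lower o.twistedRaise = (1 - p ^ 2) • (↑o.weight⁻¹ : R) := by
  have h_lower_raise : o.lower * o.twistedRaise = ↑o.weight⁻¹ - p ^ 2 • (o.weight : R) := by
    rw [twistedRaise, ← mul_assoc, o.lower_mul_raise, sub_mul, one_mul, smul_mul_assoc,
      sq (o.weight : R), Units.mul_inv_cancel_right]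
  have h_raise_lower : o.twistedRaise * o.lower = p • (↑o.weight⁻¹ - (o.weight : R)) := by
    rw [twistedRaise, mul_assoc, o.weight_inv_mul_lower, twistedLower, mul_smul_comm, ← mul_assoc,
      o.raise_mul_lower, sub_mul, one_mul, sq, Units.mul_inv_cancel_right]
  rw [qComm_apply, h_lower_raise, h_raise_lower]
  module

end Relations

section InvertibleParameter

variable {𝕜 R : Type*} [Field 𝕜] [Ring R] [Algebra 𝕜 R] {p : 𝕜} (o : QOscillator p R)

lemma qComm_weight_inv_twistedRaise (hp : p ≠ 0) :
    qComm p⁻¹ (↑o.weight⁻¹ : R) o.twistedRaise = 0 := by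
  have h := qComm_eq_zero_iff.mp o.qComm_weight_twistedRaise
  rw [qComm_eq_zero_iff, Units.inv_mul_eq_iff_eq_mul, mul_smul_comm, ← mul_assoc, h,
    smul_mul_assoc, Units.mul_inv_cancel_right, inv_smul_smul₀ hp]

lemma qComm_weight_twistedLower (hp : p ≠ 0) :
    qComm p⁻¹ (o.weight : R) o.twistedLower = 0 := by
  rw [qComm_eq_zero_iff, o.twistedLower_mul_weight, ← inv_smul_smul₀ hp o.twistedLower,
    ← o.weight_inv_mul_lower, mul_smul_comm, Units.mul_inv_cancel_left]

lemma qComm_lower_twistedLower (hp : p ≠ 0) : qComm p⁻¹ o.lower o.twistedLower = 0 := by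
  rw [qComm_eq_zero_iff]
  nth_rw 2 [twistedLower]
  rw [mul_assoc, o.weight_inv_mul_lower, mul_smul_comm, inv_smul_smul₀ hp]

lemma qComm_twistedLower_weight_inv (hp : p ≠ 0) :
    qComm p⁻¹ o.twistedLower (↑o.weight⁻¹ : R) = 0 := by
  rw [qComm_eq_zero_iff]
  nth_rw 2 [twistedLower]
  rw [← mul_assoc, o.weight_inv_mul_lower, smul_mul_assoc, inv_smul_smul₀ hp]

lemma qComm_twistedLower_twistedRaise (hp : p ≠ 0) :
    qComm (1 : 𝕜) o.twistedLower o.twistedRaise = (p⁻¹ - p) • (↑o.weight⁻¹ : R) ^ 2 := by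
  have h_lower_raise :
      o.twistedLower * o.twistedRaise = p⁻¹ • (o.lower * o.twistedRaise * ↑o.weight⁻¹) := by
    rw [twistedLower, mul_assoc, qComm_eq_zero_iff.mp (o.qComm_weight_inv_twistedRaise hp),
      mul_smul_comm, mul_assoc]
  have h_raise_lower :
      o.twistedRaise * o.twistedLower = o.twistedRaise * o.lower * ↑o.weight⁻¹ := by
    rw [twistedLower, mul_assoc]
  calc qComm (1 : 𝕜) o.twistedLower o.twistedRaise
      = p⁻¹ • (qComm p o.lower o.twistedRaise * ↑o.weight⁻¹) := by
        rw [qComm_apply, h_lower_raise, h_raise_lower, qComm_apply, sub_mul, smul_sub,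
          smul_mul_assoc, inv_smul_smul₀ hp, one_smul]
    _ = (p⁻¹ - p) • (↑o.weight⁻¹ : R) ^ 2 := by
        rw [o.qComm_lower_twistedRaise, smul_mul_assoc, smul_smul, ← sq]
        congr 1
        field_simp

end InvertibleParameter

section Basis

variable {𝕜 M : Type*} [Field 𝕜] [AddCommGroup M] [Module 𝕜 M] {p : 𝕜}

/-- The `p`-oscillator acting on a module with basis `e 0, e 1, …` through the Fock space formulas:
`U` raises, `L` lowers, and `D`, with inverse `D'`, is the weight operator. -/
def ofBasis (e : Module.Basis ℕ 𝕜 M) (hp : p ≠ 0) (U L D D' : Module.End 𝕜 M)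
    (hU : ∀ m, U (e m) = e (m + 1)) (hL : ∀ m, L (e m) = (1 - p ^ (2 * m)) • e (m - 1))
    (hD : ∀ m, D (e m) = p ^ m • e m) (hD' : ∀ m, D' (e m) = (p ^ m)⁻¹ • e m) :
    QOscillator p (Module.End 𝕜 M) where
  raise := U
  lower := L
  weight :=
    { val := D
      inv := D'
      val_inv := e.ext fun m => by
        rw [Module.End.mul_apply, hD', map_smul, hD, inv_smul_smul₀ (pow_ne_zero m hp),
          Module.End.one_apply]
      inv_val := e.ext fun m => by
        rw [Module.End.mul_apply, hD, map_smul, hD', smul_inv_smul₀ (pow_ne_zero m hp),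
          Module.End.one_apply] }
  weight_mul_raise := e.ext fun m => by
    simp only [Module.End.mul_apply, LinearMap.smul_apply, map_smul, hU, hD, pow_succ', mul_smul]
  lower_mul_weight := e.ext fun
    | 0 => by simp only [Module.End.mul_apply, LinearMap.smul_apply, map_smul, hL, hD, mul_zero,
        pow_zero, sub_self, zero_smul, smul_zero, map_zero]
    | m + 1 => by
      simp only [Module.End.mul_apply, LinearMap.smul_apply, map_smul, hL, hD,
        add_tsub_cancel_right]
      module
  lower_mul_raise := e.ext fun m => by
    simp only [Module.End.mul_apply, LinearMap.sub_apply, LinearMap.smul_apply, map_smul,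
      Module.End.one_apply, hU, hL, hD, sq D, add_tsub_cancel_right]
    module
  raise_mul_lower := e.ext fun
    | 0 => by simp only [Module.End.mul_apply, LinearMap.sub_apply, map_zero, Module.End.one_apply,
        hL, hD, sq, mul_zero, pow_zero, sub_self, zero_smul, one_smul]
    | m + 1 => by
      simp only [Module.End.mul_apply, LinearMap.sub_apply, map_smul, Module.End.one_apply,
        hU, hL, hD, sq D, add_tsub_cancel_right]
      module

end Basis

section Coupling

variable {𝕜 M N : Type*} [Field 𝕜] [AddCommGroup M] [Module 𝕜 M] [AddCommGroup N] [Module 𝕜 N]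
  {p : 𝕜} (o : QOscillator p (Module.End 𝕜 M)) (b X : Module.End 𝕜 N)

/-- The operator `a⁻ ⊗ b + k ⊗ X`, the shape of `ξ₁` relative to its first tensor factor. -/
def coupling : Module.End 𝕜 (M ⊗[𝕜] N) :=
  o.lower ⊗ₘ b + (o.weight : Module.End 𝕜 M) ⊗ₘ X

lemma qComm_coupling_twistedRaise :
    qComm p (o.coupling b X) (o.twistedRaise ⊗ₘ 1) =
      (1 - p ^ 2) • ((↑o.weight⁻¹ : Module.End 𝕜 M) ⊗ₘ b) := by
  rw [coupling, map_add, LinearMap.add_apply,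
    qComm_map_of_commute_right _ _ _ (Commute.one_right b),
    qComm_map_of_commute_right _ _ _ (Commute.one_right X), o.qComm_lower_twistedRaise,
    o.qComm_weight_twistedRaise, TensorProduct.map_zero_left, add_zero,
    TensorProduct.map_smul_left, mul_one]

lemma qComm_weight_inv_map_twistedRaise_map_one (hp : p ≠ 0) :
    qComm p⁻¹ ((↑o.weight⁻¹ : Module.End 𝕜 M) ⊗ₘ b) (o.twistedRaise ⊗ₘ 1) = 0 := by
  rw [qComm_map_of_commute_right _ _ _ (Commute.one_right b), o.qComm_weight_inv_twistedRaise hp,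
    TensorProduct.map_zero_left]

lemma qComm_coupling_weight_inv_map :
    qComm (1 : 𝕜) (o.coupling b X) ((↑o.weight⁻¹ : Module.End 𝕜 M) ⊗ₘ b) =
      (1 - p) • (o.twistedLower ⊗ₘ (b ^ 2)) + 1 ⊗ₘ qComm (1 : 𝕜) X b := by
  rw [coupling, map_add, LinearMap.add_apply, qComm_map_of_commute_right _ _ _ (Commute.refl b),
    qComm_map_of_commute_left _ (Commute.refl o.weight).inv_right.units_val,
    o.qComm_lower_weight_inv, TensorProduct.map_smul_left, sq, Units.mul_inv]

variable {b X}

lemma qComm_coupling_qComm_coupling_weight_inv_map (hp : p ≠ 0)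
    (hb : qComm p⁻¹ (qComm (1 : 𝕜) X b) b = 0) (hX : qComm p⁻¹ X (qComm (1 : 𝕜) X b) = 0) :
    qComm p⁻¹ (o.coupling b X)
      (qComm (1 : 𝕜) (o.coupling b X) ((↑o.weight⁻¹ : Module.End 𝕜 M) ⊗ₘ b)) = 0 := by
  have h_lower_lower : qComm p⁻¹ (o.lower ⊗ₘ b) (o.twistedLower ⊗ₘ (b ^ 2)) = 0 := by
    rw [qComm_map_of_commute_right _ _ _ ((Commute.refl b).pow_right 2),
      o.qComm_lower_twistedLower hp, TensorProduct.map_zero_left]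
  have h_weight_one :
      qComm p⁻¹ ((o.weight : Module.End 𝕜 M) ⊗ₘ X) (1 ⊗ₘ qComm (1 : 𝕜) X b) = 0 := by
    rw [qComm_map_of_commute_left _ (Commute.one_right _), hX, TensorProduct.map_zero_right]
  have h_lower_one : qComm p⁻¹ (o.lower ⊗ₘ b) (1 ⊗ₘ qComm (1 : 𝕜) X b) =
      o.lower ⊗ₘ qComm p⁻¹ b (qComm (1 : 𝕜) X b) := by
    rw [qComm_map_of_commute_left _ (Commute.one_right _), mul_one]
  have h_weight_lower : qComm p⁻¹ ((o.weight : Module.End 𝕜 M) ⊗ₘ X) (o.twistedLower ⊗ₘ (b ^ 2)) =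
      p⁻¹ • (o.lower ⊗ₘ qComm (1 : 𝕜) X (b ^ 2)) := by
    have h := o.qComm_weight_twistedLower hp
    rw [← mul_one p⁻¹, qComm_map_of_qComm_left_eq_zero 1 h, qComm_eq_zero_iff.mp h,
      o.twistedLower_mul_weight, TensorProduct.map_smul_left, mul_one]
  have h_cross : (1 - p⁻¹) • qComm (1 : 𝕜) X (b ^ 2) = qComm p⁻¹ b (qComm (1 : 𝕜) X b) :=
    sub_eq_zero.mp ((qComm_qComm_one_right p⁻¹ X b).symm.trans hb)
  have h_scalar : (1 - p) * p⁻¹ + (1 - p⁻¹) = 0 := by field_simp; ring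
  rw [o.qComm_coupling_weight_inv_map, map_add, map_smul, coupling, map_add,
    LinearMap.add_apply, LinearMap.add_apply, h_lower_lower, h_weight_one, h_lower_one,
    h_weight_lower, ← h_cross, TensorProduct.map_smul_right, zero_add, add_zero, smul_smul,
    ← add_smul, h_scalar, zero_smul]

end Coupling

section ReducedCoupling

variable {𝕜 M N : Type*} [Field 𝕜] [AddCommGroup M] [Module 𝕜 M] [AddCommGroup N] [Module 𝕜 N]
  {p : 𝕜} (o : QOscillator p (Module.End 𝕜 M)) (Z W : Module.End 𝕜 N)

/-- The operator `a⁻k⁻¹ ⊗ Z + 1 ⊗ W`: the factor paired with `K` in `ξ₁`, relative to the second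
tensor factor of `V`. -/
def reducedCoupling : Module.End 𝕜 (M ⊗[𝕜] N) := o.twistedLower ⊗ₘ Z + 1 ⊗ₘ W

lemma qComm_reducedCoupling_twistedRaise (hp : p ≠ 0) :
    qComm (1 : 𝕜) (o.reducedCoupling Z W) (o.twistedRaise ⊗ₘ 1) =
      (p⁻¹ - p) • (((↑o.weight⁻¹ : Module.End 𝕜 M) ^ 2) ⊗ₘ Z) := by
  have h : qComm (1 : 𝕜) 1 o.twistedRaise = 0 :=
    qComm_one_eq_zero_iff_commute.mpr (Commute.one_left _)
  rw [reducedCoupling, map_add, LinearMap.add_apply,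
    qComm_map_of_commute_right _ _ _ (Commute.one_right Z),
    qComm_map_of_commute_right _ _ _ (Commute.one_right W), h, TensorProduct.map_zero_left,
    add_zero, o.qComm_twistedLower_twistedRaise hp, TensorProduct.map_smul_left, mul_one]

lemma qComm_qComm_reducedCoupling_twistedRaise (hp : p ≠ 0) :
    qComm (p ^ 2)⁻¹ (qComm (1 : 𝕜) (o.reducedCoupling Z W) (o.twistedRaise ⊗ₘ 1))
      (o.twistedRaise ⊗ₘ 1) = 0 := by
  rw [o.qComm_reducedCoupling_twistedRaise Z W hp, map_smul, LinearMap.smul_apply,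
    qComm_map_of_commute_right _ _ _ (Commute.one_right Z), ← inv_pow,
    qComm_sq_left (o.qComm_weight_inv_twistedRaise hp), TensorProduct.map_zero_left, smul_zero]

variable {Z W}

lemma qComm_reducedCoupling_qComm_twistedRaise (hp : p ≠ 0) (hWZ : qComm (p ^ 2)⁻¹ W Z = 0) :
    qComm (p ^ 2)⁻¹ (o.reducedCoupling Z W)
      (qComm (1 : 𝕜) (o.reducedCoupling Z W) (o.twistedRaise ⊗ₘ 1)) = 0 := by
  rw [o.qComm_reducedCoupling_twistedRaise Z W hp, map_smul, reducedCoupling, map_add,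
    LinearMap.add_apply, qComm_map_of_commute_right _ _ _ (Commute.refl Z),
    qComm_map_of_commute_left _ (Commute.one_left _), hWZ, ← inv_pow,
    qComm_sq_right (o.qComm_twistedLower_weight_inv hp), TensorProduct.map_zero_left,
    TensorProduct.map_zero_right, add_zero, smul_zero]

end ReducedCoupling

end QOscillator

open QOscillator

section Fock

lemma lift_ket (f : ℕ → F) (m : ℕ) : Finsupp.lift F K ℕ f (ket m) = f m := by
  rw [ket, Finsupp.lift_apply, Finsupp.sum_single_index (zero_smul K (f m)), one_smul]

lemma q_ne_zero : q ≠ 0 := RatFunc.X_ne_zero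

/-- The basis of the Fock space formed by the vectors `ket m`. -/
def ketBasis : Module.Basis ℕ K F := Finsupp.basisSingleOne

/-- The `q`-oscillator on `F_q`. -/
def fockOscillatorQ : QOscillator q (Module.End K F) :=
  ofBasis ketBasis q_ne_zero opAp opAm opK opKInv
    (lift_ket _) (lift_ket _) (lift_ket _) (lift_ket _)

/-- The `q²`-oscillator on `F_{q²}`. -/
def fockOscillatorQSq : QOscillator (q ^ 2) (Module.End K F) :=
  ofBasis ketBasis (pow_ne_zero 2 q_ne_zero) opAp opAm2 opK2 opK2Inv (lift_ket _)
    (fun m => by rw [← pow_mul, ← mul_assoc]; exact lift_ket _ m)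
    (fun m => by rw [← pow_mul]; exact lift_ket _ m)
    (fun m => by rw [← pow_mul]; exact lift_ket _ m)

lemma xi2_eq : xi2 = (1 - q ^ 4)⁻¹ • (fockOscillatorQSq.twistedRaise ⊗ₘ 1) := by
  rw [xi2, tens4, TensorProduct.map_one, TensorProduct.map_one]
  rfl

lemma xi1_eq : xi1 = (1 - q ^ 2)⁻¹ •
    fockOscillatorQSq.coupling (N := F ⊗[K] (F ⊗[K] F)) (fockOscillatorQ.twistedRaise ⊗ₘ 1)
      (fockOscillatorQ.reducedCoupling (N := F ⊗[K] F) (fockOscillatorQSq.twistedRaise ⊗ₘ 1)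
        ((↑fockOscillatorQSq.weight⁻¹ : Module.End K F) ⊗ₘ fockOscillatorQ.twistedRaise)) := by
  rw [xi1, coupling, reducedCoupling, TensorProduct.map_add_right, ← add_assoc]
  simp only [tens4, TensorProduct.map_one]
  rfl

end Fock

theorem statement15_general {𝕜 M₁ M₂ N : Type*} [Field 𝕜] [AddCommGroup M₁] [Module 𝕜 M₁]
    [AddCommGroup M₂] [Module 𝕜 M₂] [AddCommGroup N] [Module 𝕜 N] {s : 𝕜} (hs : s ≠ 0)
    (o₁ : QOscillator (s ^ 2) (Module.End 𝕜 M₁)) (o₂ : QOscillator s (Module.End 𝕜 M₂))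
    {Z W : Module.End 𝕜 N} (hWZ : qComm (s ^ 2)⁻¹ W Z = 0) (α β : 𝕜)
    {x y : Module.End 𝕜 (M₁ ⊗[𝕜] (M₂ ⊗[𝕜] N))}
    (hx : x = α • o₁.coupling (o₂.twistedRaise ⊗ₘ 1) (o₂.reducedCoupling Z W))
    (hy : y = β • (o₁.twistedRaise ⊗ₘ 1)) :
    x ^ 3 * y - (s ^ 2 + 1 + s⁻¹ ^ 2) • (x ^ 2 * y * x)
        + (s ^ 2 + 1 + s⁻¹ ^ 2) • (x * y * x ^ 2) - y * x ^ 3 = 0 ∧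
    y ^ 2 * x - (s ^ 2 + s⁻¹ ^ 2) • (y * x * y) + x * y ^ 2 = 0 := by
  have hs₂ : s ^ 2 ≠ 0 := pow_ne_zero 2 hs
  have h_cubic : qComm (s ^ 2)⁻¹ x (qComm (1 : 𝕜) x (qComm (s ^ 2) x y)) = 0 := by
    simp only [hx, hy, map_smul, LinearMap.smul_apply, o₁.qComm_coupling_twistedRaise,
      o₁.qComm_coupling_qComm_coupling_weight_inv_map hs₂
        (o₂.qComm_qComm_reducedCoupling_twistedRaise Z W hs)
        (o₂.qComm_reducedCoupling_qComm_twistedRaise hs hWZ), smul_zero]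
  have h_quadratic : qComm (s ^ 2)⁻¹ (qComm (s ^ 2) x y) y = 0 := by
    simp only [hx, hy, map_smul, LinearMap.smul_apply, o₁.qComm_coupling_twistedRaise,
      o₁.qComm_weight_inv_map_twistedRaise_map_one _ hs₂, smul_zero]
  rw [qComm_qComm_qComm_left] at h_cubic
  rw [qComm_qComm_right] at h_quadratic
  simp only [mul_one, one_mul, mul_inv_cancel₀ hs₂, one_smul] at h_cubic h_quadratic
  rw [inv_pow]
  exact ⟨h_cubic, h_quadratic⟩

/-- `ξ₁, ξ₂` satisfy the `q`-Serre relations of type `C₂`,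
with `[3]₁ = q² + 1 + q⁻²`. -/
theorem statement15 :
    xi1 ^ 3 * xi2 - (q ^ 2 + 1 + q⁻¹ ^ 2) • (xi1 ^ 2 * xi2 * xi1)
        + (q ^ 2 + 1 + q⁻¹ ^ 2) • (xi1 * xi2 * xi1 ^ 2) - xi2 * xi1 ^ 3 = 0 ∧
    xi2 ^ 2 * xi1 - (q ^ 2 + q⁻¹ ^ 2) • (xi2 * xi1 * xi2) + xi1 * xi2 ^ 2 = 0 := by
  exact statement15_general (𝕜 := K) (M₁ := F) (M₂ := F) (N := F ⊗[K] F) q_ne_zero _ _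
    (qComm_weight_inv_map_twistedRaise_map_one _ _ (pow_ne_zero 2 q_ne_zero)) _ _ xi1_eq xi2_eq
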